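/- Let f, g : ℝⁿ → [0,∞) be upper semicontinuous log-concave functions with 0 < ∫_{ℝⁿ} f dx < ∞, and for m ∈ ℕ define g_m(x) = g(x) if |x| ≤ m and g_m(x) = 0 otherwise. Then δ(f, g_m) is nondecreasing in m and lim_{m→∞} δ(f, g_m) = δ(f, g), as limits in (−∞, +∞]. -/

import Mathlib

open MeasureTheory Set Filter Topology Pointwise
open scoped ENNReal RealInnerProductSpace NNReal

noncomputable section

/-- Euclidean space ℝⁿ. -/
abbrev Euc (n : ℕ) := EuclideanSpace ℝ (Fin n)

/-- A nonnegative function is log-concave if `f((1-λ)x+λy) ≥ f(x)^{1-λ} f(y)^λ`. -/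
def LogConcaveFn {n : ℕ} (f : Euc n → ℝ) : Prop :=
  ∀ x y : Euc n, ∀ l : ℝ, 0 ≤ l → l ≤ 1 →
    f x ^ (1 - l) * f y ^ l ≤ f ((1 - l) • x + l • y)

/-- Sup-convolution `(f⋆g)(x) = sup_y f(y) g(x-y)`, valued in `[0,∞]`. -/
def supConv {n : ℕ} (f g : Euc n → ℝ) (x : Euc n) : ℝ≥0∞ :=
  ⨆ y : Euc n, ENNReal.ofReal (f y * g (x - y))

/-- Dilation `(t·g)(x) = g(x/t)^t`. -/
def dil {n : ℕ} (t : ℝ) (g : Euc n → ℝ) (x : Euc n) : ℝ :=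
  g (t⁻¹ • x) ^ t

/-- Total mass `∫ f` of a nonnegative function, in `[0,∞]`. -/
def totalMass {n : ℕ} (f : Euc n → ℝ) : ℝ≥0∞ := ∫⁻ x, ENNReal.ofReal (f x)

/-- The difference quotient `(∫ f⋆(t·g) − ∫ f)/t`, valued in `EReal`. -/
def deltaQuot {n : ℕ} (f g : Euc n → ℝ) (t : ℝ) : EReal :=
  ((t⁻¹ : ℝ) : EReal) *
    (((∫⁻ x, supConv f (dil t g) x : ℝ≥0∞) : EReal) - ((totalMass f : ℝ≥0∞) : EReal))

/-- The support `K_f`: closure of `{x : f(x) > 0}`. -/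
def spt {n : ℕ} (f : Euc n → ℝ) : Set (Euc n) := closure {x | 0 < f x}

/-- `φ = -log f`. -/
def mlog {n : ℕ} (f : Euc n → ℝ) (x : Euc n) : ℝ := -Real.log (f x)

/-- The measure `μ_f`: pushforward of `f dx` under the (a.e. defined) gradient of `φ = -log f`. -/
def muF {n : ℕ} (f : Euc n → ℝ) : Measure (Euc n) :=
  Measure.map (gradient (mlog f)) (volume.withDensity fun x => ENNReal.ofReal (f x))

-- The outer unit normal (Gauss) map of a convex set `K`, defined (H^{n-1}-a.e. uniquely)
-- at boundary points; junk value `0` where no outer normal exists.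
open Classical in
def gaussMap {n : ℕ} (K : Set (Euc n)) (x : Euc n) : Euc n :=
  if h : ∃ u : Euc n, ‖u‖ = 1 ∧ ∀ y ∈ K, ⟪y - x, u⟫ ≤ 0 then h.choose else 0

/-- The weighted boundary measure `f · H^{n-1}|_{∂K_f}`. -/
def bdryMeasure {n : ℕ} (f : Euc n → ℝ) : Measure (Euc n) :=
  ((μH[(n : ℝ) - 1] : Measure (Euc n)).restrict (frontier (spt f))).withDensity
    (fun x => ENNReal.ofReal (f x))

/-- The measure `ν_f` on the sphere: pushforward of `f · H^{n-1}|_{∂K_f}` under the Gauss map. -/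
def nuF {n : ℕ} (f : Euc n → ℝ) : Measure (Euc n) :=
  Measure.map (gaussMap (spt f)) (bdryMeasure f)

/-- Positive part of an extended real, in `[0,∞]`. -/
def epos (a : EReal) : ℝ≥0∞ := if a = ⊤ then ⊤ else ENNReal.ofReal a.toReal

/-- Integral of an `EReal`-valued function: positive part minus negative part. -/
def eInt {n : ℕ} (μ : Measure (Euc n)) (h : Euc n → EReal) : EReal :=
  ((∫⁻ x, epos (h x) ∂μ : ℝ≥0∞) : EReal) - ((∫⁻ x, epos (-(h x)) ∂μ : ℝ≥0∞) : EReal)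

/-- The support function `h_g = (-log g)^*` of a log-concave function, valued in `EReal`. -/
def hSupp {n : ℕ} (g : Euc n → ℝ) (x : Euc n) : EReal :=
  ⨆ y : Euc n, (((⟪x, y⟫ : ℝ) : EReal) +
    (if g y = 0 then (⊥ : EReal) else ((Real.log (g y) : ℝ) : EReal)))

/-- The support function of a set, valued in `EReal`. -/
def hSetE {n : ℕ} (K : Set (Euc n)) (x : Euc n) : EReal :=
  ⨆ y ∈ K, ((⟪y, x⟫ : ℝ) : EReal)

/-- The support function of a set, real-valued: `h_K(x) = sup_{y ∈ K} ⟨y, x⟩`. -/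
def hSetR {n : ℕ} (K : Set (Euc n)) (x : Euc n) : ℝ :=
  sSup ((fun y => ⟪y, x⟫) '' K)

/-- Divergence of a vector field: the trace of its derivative. -/
def dvg {n : ℕ} (Φ : Euc n → Euc n) (x : Euc n) : ℝ :=
  LinearMap.trace ℝ (Euc n) (fderiv ℝ Φ x : Euc n →ₗ[ℝ] Euc n)

/-- The anisotropic total variation `TV_L(f)`. -/
def TVL {n : ℕ} (L : Set (Euc n)) (f : Euc n → ℝ) : EReal :=
  ⨆ Φ : {Φ : Euc n → Euc n //
      ContDiff ℝ 1 Φ ∧ HasCompactSupport Φ ∧ ∀ x, gauge L (Φ x) ≤ 1},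
    ((∫ x, f x * dvg Φ.1 x : ℝ) : EReal)

/-- The anisotropic perimeter `Per_L(A) = TV_L(1_A)`. -/
def PerL {n : ℕ} (L : Set (Euc n)) (A : Set (Euc n)) : EReal :=
  TVL L (A.indicator fun _ => (1 : ℝ))

/-- The surface area measure `S_F` of a convex body: pushforward of `H^{n-1}|_{∂F}`
under the Gauss map. -/
def surfMeasure {n : ℕ} (F : Set (Euc n)) : Measure (Euc n) :=
  Measure.map (gaussMap F) ((μH[(n : ℝ) - 1] : Measure (Euc n)).restrict (frontier F))




theorem bm_compact {K L : Set ℝ} {C : Set ℝ} (hK : IsCompact K) (hL : IsCompact L)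
    (hK0 : K.Nonempty) (hL0 : L.Nonempty) (h : ∀ a ∈ K, ∀ b ∈ L, a + b ∈ C) :
    volume K + volume L ≤ volume C := by
  obtain ⟨k, hk, hkm⟩ := hK.exists_isGreatest hK0
  obtain ⟨l, hl, hlm⟩ := hL.exists_isLeast hL0
  have h1 : volume ((fun x => x + l) '' K) = volume K := by
    simp
  have h2 : volume ((fun x => k + x) '' L) = volume L := by
    simp
  rw [← h1, ← h2]
  have hm : MeasurableSet ((fun x => k + x) '' L) :=
    (hL.image (by fun_prop)).measurableSet
  rw [← measure_union₀ hm.nullMeasurableSet]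
  · apply measure_mono
    rintro _ (⟨a, ha, rfl⟩ | ⟨b, hb, rfl⟩)
    · exact h _ ha _ hl
    · exact h _ hk _ hb
  · refine measure_mono_null (t := {k + l}) ?_ (by simp)
    rintro _ ⟨⟨a, ha, rfl⟩, ⟨b, hb, hab⟩⟩
    have := hkm ha
    have := hlm hb
    simp only [mem_singleton_iff] at *
    linarith

theorem bm_one {A B C : Set ℝ} (hA : MeasurableSet A) (hB : MeasurableSet B)
    (hA0 : A.Nonempty) (hB0 : B.Nonempty) (h : ∀ a ∈ A, ∀ b ∈ B, a + b ∈ C) :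
    volume A + volume B ≤ volume C := by
  obtain ⟨a, ha⟩ := hA0
  obtain ⟨b, hb⟩ := hB0
  rw [hA.measure_eq_iSup_isCompact, hB.measure_eq_iSup_isCompact]
  simp only [iSup_and']
  refine ENNReal.biSup_add_biSup_le' ⟨∅, by simp⟩ ⟨∅, by simp⟩ ?_
  rintro K ⟨hKA, hK⟩ L ⟨hLB, hL⟩
  refine le_trans (add_le_add (measure_mono (subset_insert a K))
    (measure_mono (subset_insert b L))) ?_
  refine bm_compact (hK.insert a) (hL.insert b) (insert_nonempty _ _) (insert_nonempty _ _) ?_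
  intro x hx y hy
  exact h x (insert_subset ha hKA hx) y (insert_subset hb hLB hy)

theorem pl_core {l : ℝ} (hl0 : 0 < l) (hl1 : l < 1) {U V W : ℝ → ℝ}
    (hU : Measurable U) (hV : Measurable V) (hW : Measurable W)
    (hU0 : ∀ x, 0 ≤ U x) (hV0 : ∀ x, 0 ≤ V x) (hW0 : ∀ x, 0 ≤ W x)
    (hU1 : ∀ x, U x ≤ 1) (hV1 : ∀ x, V x ≤ 1)
    (hUs : ∀ s < 1, ∃ x, s < U x) (hVs : ∀ s < 1, ∃ x, s < V x)
    (h : ∀ x y s, 0 < s → s < U x → s < V y → s < W ((1 - l) * x + l * y)) :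
    ENNReal.ofReal (1 - l) * (∫⁻ x, ENNReal.ofReal (U x)) +
      ENNReal.ofReal l * (∫⁻ x, ENNReal.ofReal (V x)) ≤ ∫⁻ x, ENNReal.ofReal (W x) := by
  rw [lintegral_eq_lintegral_meas_lt volume (.of_forall hU0) hU.aemeasurable,
    lintegral_eq_lintegral_meas_lt volume (.of_forall hV0) hV.aemeasurable,
    lintegral_eq_lintegral_meas_lt volume (.of_forall hW0) hW.aemeasurable,
    ← lintegral_const_mul' _ _ (by simp), ← lintegral_const_mul' _ _ (by simp)]
  have anti : ∀ F : ℝ → ℝ, Measurable fun t => volume {a | t < F a} := by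
    intro F
    apply Antitone.measurable
    intro s t hst
    exact measure_mono fun x hx => lt_of_le_of_lt hst hx
  rw [← lintegral_add_left ((anti U).const_mul _)]
  refine setLIntegral_mono (anti W) ?_
  intro s hs
  have hs : 0 < s := hs
  by_cases hs1 : s < 1
  · have e1 : ENNReal.ofReal (1 - l) * volume {a | s < U a}
        = volume ((1 - l) • {a | s < U a}) := by
      rw [Measure.addHaar_smul]
      simp [abs_of_pos (sub_pos.2 hl1)]
    have e2 : ENNReal.ofReal l * volume {a | s < V a}
        = volume (l • {a | s < V a}) := by
      rw [Measure.addHaar_smul]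
      simp [abs_of_pos hl0]
    rw [e1, e2]
    refine bm_one ?_ ?_ ?_ ?_ ?_
    · exact (measurableSet_lt measurable_const hU).const_smul₀ _
    · exact (measurableSet_lt measurable_const hV).const_smul₀ _
    · obtain ⟨x, hx⟩ := hUs s hs1
      exact ⟨_, smul_mem_smul_set hx⟩
    · obtain ⟨x, hx⟩ := hVs s hs1
      exact ⟨_, smul_mem_smul_set hx⟩
    · rintro _ ⟨x, hx, rfl⟩ _ ⟨y, hy, rfl⟩
      exact h x y s hs hx hy
  · have e1 : {a | s < U a} = ∅ := by
      ext x; simpa using (hU1 x).trans (not_lt.1 hs1)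
    have e2 : {a | s < V a} = ∅ := by
      ext x; simpa using (hV1 x).trans (not_lt.1 hs1)
    simp [e1, e2]

theorem amgm {l : ℝ} (hl0 : 0 < l) (hl1 : l < 1) (p q : ℝ≥0∞) :
    p ^ (1 - l) * q ^ l ≤ ENNReal.ofReal (1 - l) * p + ENNReal.ofReal l * q := by
  have h1 : 0 < 1 - l := sub_pos.2 hl1
  induction p with
  | top => simp [h1, ENNReal.mul_top, hl1]
  | coe p =>
    induction q with
    | top => simp [hl0]
    | coe q =>
      have := NNReal.geom_mean_le_arith_mean2_weighted (1 - l).toNNReal l.toNNReal p q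
        (by ext; simp [hl0.le, h1.le])
      rw [← ENNReal.coe_rpow_of_nonneg _ hl0.le, ← ENNReal.coe_rpow_of_nonneg _ h1.le]
      simp only [Real.coe_toNNReal _ hl0.le, Real.coe_toNNReal _ h1.le] at this
      unfold ENNReal.ofReal
      exact_mod_cast this

theorem pl_bdd {l : ℝ} (hl0 : 0 < l) (hl1 : l < 1) {u v w : ℝ → ℝ≥0∞} {k : ℝ≥0∞} (hk : k ≠ ⊤)
    (hu : Measurable u) (hv : Measurable v) (hw : Measurable w)
    (huk : ∀ x, u x ≤ k) (hvk : ∀ x, v x ≤ k)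
    (h : ∀ x y, u x ^ (1 - l) * v y ^ l ≤ w ((1 - l) * x + l * y)) :
    (∫⁻ x, u x) ^ (1 - l) * (∫⁻ x, v x) ^ l ≤ ∫⁻ x, w x := by
  have h1 : 0 < 1 - l := sub_pos.2 hl1
  set a := ⨆ x, u x with ha
  set b := ⨆ x, v x with hb
  have hat : a ≠ ⊤ := ne_top_of_le_ne_top hk (iSup_le huk)
  have hbt : b ≠ ⊤ := ne_top_of_le_ne_top hk (iSup_le hvk)
  by_cases ha0 : a = 0
  · have : ∀ x, u x = 0 := by simpa [ha] using ha0
    simp [this, h1]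
  by_cases hb0 : b = 0
  · have : ∀ x, v x = 0 := by simpa [hb] using hb0
    simp [this, hl0]
  have hua : ∀ x, u x * a⁻¹ ≤ 1 := fun x => by
    rw [← div_eq_mul_inv]; exact ENNReal.div_le_of_le_mul (by simpa using le_iSup u x)
  have hvb : ∀ x, v x * b⁻¹ ≤ 1 := fun x => by
    rw [← div_eq_mul_inv]; exact ENNReal.div_le_of_le_mul (by simpa using le_iSup v x)
  have hai0 : a⁻¹ ≠ 0 := by simpa using hat
  have hait : a⁻¹ ≠ ⊤ := by simpa using ha0
  have hbi0 : b⁻¹ ≠ 0 := by simpa using hbt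
  have hbit : b⁻¹ ≠ ⊤ := by simpa using hb0
  set c := a⁻¹ ^ (1 - l) * b⁻¹ ^ l with hc
  have hc0 : c ≠ 0 := mul_ne_zero (ENNReal.rpow_pos (pos_iff_ne_zero.2 hai0) hait).ne'
    (ENNReal.rpow_pos (pos_iff_ne_zero.2 hbi0) hbit).ne'
  have hct : c ≠ ⊤ := ENNReal.mul_ne_top (ENNReal.rpow_ne_top_of_nonneg h1.le hait)
    (ENNReal.rpow_ne_top_of_nonneg hl0.le hbit)
  have split : ∀ p q : ℝ≥0∞, (p * a⁻¹) ^ (1 - l) * (q * b⁻¹) ^ l = p ^ (1 - l) * q ^ l * c := by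
    intro p q
    rw [ENNReal.mul_rpow_of_nonneg _ _ h1.le, ENNReal.mul_rpow_of_nonneg _ _ hl0.le, hc]
    ring
  have fU : ∀ x, ENNReal.ofReal (u x * a⁻¹).toReal = u x * a⁻¹ := fun x =>
    ENNReal.ofReal_toReal (ne_top_of_le_ne_top ENNReal.one_ne_top (hua x))
  have fV : ∀ x, ENNReal.ofReal (v x * b⁻¹).toReal = v x * b⁻¹ := fun x =>
    ENNReal.ofReal_toReal (ne_top_of_le_ne_top ENNReal.one_ne_top (hvb x))
  have fW : ∀ x, ENNReal.ofReal (min (w x * c) 1).toReal = min (w x * c) 1 := fun x =>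
    ENNReal.ofReal_toReal (ne_top_of_le_ne_top ENNReal.one_ne_top (min_le_right _ _))
  have sup_aux : ∀ (z : ℝ → ℝ≥0∞) (d : ℝ≥0∞), d = (⨆ x, z x) → d ≠ 0 → d ≠ ⊤ →
      (∀ x, z x * d⁻¹ ≤ 1) →
      ∀ s : ℝ, s < 1 → ∃ x, s < (z x * d⁻¹).toReal := by
    intro z d hd hd0 hdt hz s hs
    rcases lt_or_ge s 0 with hs0 | hs0
    · exact ⟨0, hs0.trans_le ENNReal.toReal_nonneg⟩
    have : ENNReal.ofReal s * d < d := by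
      calc ENNReal.ofReal s * d < 1 * d :=
            ENNReal.mul_lt_mul_left hd0 hdt (by simpa using hs)
        _ = d := one_mul d
    conv_rhs at this => rw [hd]
    obtain ⟨x, hx⟩ := lt_iSup_iff.1 this
    refine ⟨x, ?_⟩
    rw [← ENNReal.ofReal_lt_iff_lt_toReal hs0 (ne_top_of_le_ne_top ENNReal.one_ne_top (hz x)),
      ← div_eq_mul_inv]
    exact (ENNReal.lt_div_iff_mul_lt (Or.inl hd0) (Or.inl hdt)).2 hx
  have key := pl_core hl0 hl1 (U := fun x => (u x * a⁻¹).toReal) (V := fun x => (v x * b⁻¹).toReal)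
    (W := fun x => (min (w x * c) 1).toReal)
    (by fun_prop) (by fun_prop) (by fun_prop)
    (fun _ => ENNReal.toReal_nonneg) (fun _ => ENNReal.toReal_nonneg)
    (fun _ => ENNReal.toReal_nonneg)
    (fun x => ENNReal.toReal_le_of_le_ofReal zero_le_one (by simpa using hua x))
    (fun x => ENNReal.toReal_le_of_le_ofReal zero_le_one (by simpa using hvb x))
    (sup_aux u a ha ha0 hat hua) (sup_aux v b hb hb0 hbt hvb) (by
      intro x y s hs hx hy
      rw [← ENNReal.ofReal_lt_iff_lt_toReal hs.le
        (ne_top_of_le_ne_top ENNReal.one_ne_top (hua x))] at hx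
      rw [← ENNReal.ofReal_lt_iff_lt_toReal hs.le
        (ne_top_of_le_ne_top ENNReal.one_ne_top (hvb y))] at hy
      rw [← ENNReal.ofReal_lt_iff_lt_toReal hs.le
        (ne_top_of_le_ne_top ENNReal.one_ne_top (min_le_right _ _))]
      refine lt_min ?_ (hx.trans_le (hua x))
      have hs' : ENNReal.ofReal s ≠ 0 := by simpa using hs
      calc ENNReal.ofReal s = ENNReal.ofReal s ^ (1 - l) * ENNReal.ofReal s ^ l := by
            rw [← ENNReal.rpow_add _ _ hs' (by simp)]; simp
        _ < (u x * a⁻¹) ^ (1 - l) * (v y * b⁻¹) ^ l :=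
            ENNReal.mul_lt_mul (ENNReal.rpow_lt_rpow hx h1) (ENNReal.rpow_lt_rpow hy hl0)
        _ = u x ^ (1 - l) * v y ^ l * c := split _ _
        _ ≤ _ := by gcongr; exact h x y)
  simp only [fU, fV, fW] at key
  rw [lintegral_mul_const _ hu, lintegral_mul_const _ hv] at key
  have key2 := (amgm hl0 hl1 _ _).trans key
  rw [split] at key2
  have key3 : (∫⁻ x, min (w x * c) 1) ≤ (∫⁻ x, w x) * c := by
    rw [← lintegral_mul_const _ hw]
    exact lintegral_mono fun x => min_le_left _ _
  exact (ENNReal.mul_le_mul_iff_left hc0 hct).1 (key2.trans key3)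

theorem pl_one {l : ℝ} (hl0 : 0 < l) (hl1 : l < 1) {u v w : ℝ → ℝ≥0∞}
    (hu : Measurable u) (hv : Measurable v) (hw : Measurable w)
    (h : ∀ x y, u x ^ (1 - l) * v y ^ l ≤ w ((1 - l) * x + l * y)) :
    (∫⁻ x, u x) ^ (1 - l) * (∫⁻ x, v x) ^ l ≤ ∫⁻ x, w x := by
  have h1 : 0 < 1 - l := sub_pos.2 hl1
  have conv : ∀ z : ℝ → ℝ≥0∞, Measurable z →
      Tendsto (fun k : ℕ => ∫⁻ x, min (z x) k) atTop (𝓝 (∫⁻ x, z x)) := by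
    intro z hz
    refine lintegral_tendsto_of_tendsto_of_monotone (fun k => (by fun_prop)) ?_ ?_
    · refine .of_forall fun x i j hij => ?_
      dsimp only
      gcongr
    · refine .of_forall fun x => ?_
      have := (tendsto_const_nhds (x := z x)).min ENNReal.tendsto_nat_nhds_top
      simpa using this
  by_cases hu0 : (∫⁻ x, u x) = 0
  · simp [hu0, h1]
  by_cases hv0 : (∫⁻ x, v x) = 0
  · simp [hv0, hl0]
  have T := ENNReal.Tendsto.mul
    (((ENNReal.continuous_rpow_const (y := 1 - l)).tendsto _).comp (conv u hu))
    (Or.inl (by simp [hu0, h1, not_lt.2 h1.le]))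
    (((ENNReal.continuous_rpow_const (y := l)).tendsto _).comp (conv v hv))
    (Or.inl (by simp [hv0, hl0, not_lt.2 hl0.le]))
  refine le_of_tendsto' T fun k => ?_
  refine pl_bdd hl0 hl1 (k := k) (by simp) (by fun_prop) (by fun_prop) hw (fun x => min_le_right _ _)
    (fun x => min_le_right _ _) ?_
  intro x y
  refine le_trans ?_ (h x y)
  gcongr <;> exact min_le_left _ _

theorem pl_pi {l : ℝ} (hl0 : 0 < l) (hl1 : l < 1) (n : ℕ) : ∀ {u v w : (Fin n → ℝ) → ℝ≥0∞}
    (_ : Measurable u) (_ : Measurable v) (_ : Measurable w)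
    (_ : ∀ x y, u x ^ (1 - l) * v y ^ l ≤ w ((1 - l) • x + l • y)),
    (∫⁻ x, u x) ^ (1 - l) * (∫⁻ x, v x) ^ l ≤ ∫⁻ x, w x := by
  induction n with
  | zero =>
    intro u v w hu hv hw h
    have := h default default
    rw [Subsingleton.elim ((1 - l) • (default : Fin 0 → ℝ) + l • default) default] at this
    simp [lintegral_unique, volume_pi]
    convert this
  | succ n ih =>
    intro u v w hu hv hw h
    have sym : ∀ (a : ℝ) (y : Fin n → ℝ),
        (MeasurableEquiv.piFinSuccAbove (fun _ => ℝ) 0).symm (a, y) = Fin.cons a y := by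
      intro a y
      simp [MeasurableEquiv.piFinSuccAbove, Fin.insertNthEquiv]
    have fub : ∀ z : (Fin (n + 1) → ℝ) → ℝ≥0∞, Measurable z →
        ∫⁻ x, z x = ∫⁻ a : ℝ, ∫⁻ y : Fin n → ℝ, z (Fin.cons a y) := by
      intro z hz
      rw [← (volume_preserving_piFinSuccAbove (fun _ => ℝ) 0).symm.lintegral_comp hz]
      rw [Measure.volume_eq_prod, lintegral_prod _ (by fun_prop)]
      simp only [sym]
    have meas : ∀ z : (Fin (n + 1) → ℝ) → ℝ≥0∞, Measurable z →
        Measurable fun p : ℝ × (Fin n → ℝ) => z (Fin.cons p.1 p.2) := by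
      intro z hz
      have := hz.comp (MeasurableEquiv.piFinSuccAbove (fun _ : Fin (n + 1) => ℝ) 0).symm.measurable
      convert this using 2 with p
      exact congrArg z (sym p.1 p.2).symm
    rw [fub u hu, fub v hv, fub w hw]
    refine pl_one hl0 hl1 (meas u hu).lintegral_prod_right' (meas v hv).lintegral_prod_right'
      (meas w hw).lintegral_prod_right' ?_
    intro a b
    refine ih ((meas u hu).comp measurable_prodMk_left) ((meas v hv).comp measurable_prodMk_left)
      ((meas w hw).comp measurable_prodMk_left) ?_
    intro x y
    refine (h (Fin.cons a x) (Fin.cons b y)).trans (le_of_eq ?_)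
    congr 1
    funext i
    refine Fin.cases ?_ (fun i => ?_) i <;> simp

theorem pl_euc {l : ℝ} (hl0 : 0 < l) (hl1 : l < 1) {n : ℕ} {u v w : Euc n → ℝ≥0∞}
    (hw : AEMeasurable w)
    (h : ∀ x y, u x ^ (1 - l) * v y ^ l ≤ w ((1 - l) • x + l • y)) :
    (∫⁻ x, u x) ^ (1 - l) * (∫⁻ x, v x) ^ l ≤ ∫⁻ x, w x := by
  have h1 : 0 < 1 - l := sub_pos.2 hl1
  obtain ⟨u', hu', huu, hui⟩ := exists_measurable_le_lintegral_eq volume u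
  obtain ⟨v', hv', hvv, hvi⟩ := exists_measurable_le_lintegral_eq volume v
  obtain ⟨N, hN, hNm, hN0⟩ := exists_measurable_superset_of_null
    (show volume {x | ¬ w x = hw.mk w x} = 0 from hw.ae_eq_mk)
  classical
  set w' : Euc n → ℝ≥0∞ := N.piecewise (fun _ => ⊤) (hw.mk w) with hw'def
  have hw' : Measurable w' := Measurable.piecewise hNm measurable_const hw.measurable_mk
  have hww : w ≤ w' := by
    intro x
    by_cases hx : x ∈ N
    · simp [hw'def, hx]
    · have : w x = hw.mk w x := by
        by_contra hne
        exact hx (hN hne)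
      simp [hw'def, hx, this]
  have hwi : ∫⁻ x, w x = ∫⁻ x, w' x := by
    refine lintegral_congr_ae ?_
    filter_upwards [hw.ae_eq_mk, measure_eq_zero_iff_ae_notMem.1 hN0] with x h1 h2
    simp [hw'def, h2, h1]
  rw [hui, hvi, hwi]
  have P := PiLp.volume_preserving_toLp (Fin n)
  rw [← P.lintegral_comp hu', ← P.lintegral_comp hv', ← P.lintegral_comp hw']
  refine pl_pi hl0 hl1 n (hu'.comp P.measurable) (hv'.comp P.measurable)
    (hw'.comp P.measurable) ?_
  intro x y
  refine le_trans ?_ ((h (WithLp.toLp 2 x) (WithLp.toLp 2 y)).trans ?_)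
  · gcongr
    · exact huu _
    · exact hvv _
  · exact hww _

theorem logConcave_dil {n : ℕ} {G : Euc n → ℝ} (hG0 : ∀ x, 0 ≤ G x) (hG : LogConcaveFn G)
    {t : ℝ} (ht : 0 < t) : LogConcaveFn (dil t G) := by
  intro x y l hl0 hl1
  unfold dil
  have := Real.rpow_le_rpow (mul_nonneg (Real.rpow_nonneg (hG0 _) _) (Real.rpow_nonneg (hG0 _) _))
    (hG (t⁻¹ • x) (t⁻¹ • y) l hl0 hl1) ht.le
  rw [Real.mul_rpow (Real.rpow_nonneg (hG0 _) _) (Real.rpow_nonneg (hG0 _) _),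
    ← Real.rpow_mul (hG0 _), ← Real.rpow_mul (hG0 _), mul_comm (1 - l), mul_comm l,
    Real.rpow_mul (hG0 _), Real.rpow_mul (hG0 _)] at this
  refine this.trans (le_of_eq ?_)
  congr 2
  simp only [smul_add, smul_smul]
  congr 2 <;> ring_nf

theorem dil_nonneg {n : ℕ} {G : Euc n → ℝ} (hG0 : ∀ x, 0 ≤ G x) (t : ℝ) (x : Euc n) :
    0 ≤ dil t G x := Real.rpow_nonneg (hG0 _) _

theorem logConcave_trunc {n : ℕ} {G : Euc n → ℝ} (hG0 : ∀ x, 0 ≤ G x) (hG : LogConcaveFn G)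
    (m : ℝ) : LogConcaveFn (fun x => if ‖x‖ ≤ m then G x else 0) := by
  intro x y l hl0 hl1
  dsimp only
  rcases hl0.eq_or_lt with rfl | hl0'
  · simp
  rcases hl1.eq_or_lt with rfl | hl1'
  · simp
  have h1 : 0 < 1 - l := sub_pos.2 hl1'
  by_cases hx : ‖x‖ ≤ m
  · by_cases hy : ‖y‖ ≤ m
    · have : ‖(1 - l) • x + l • y‖ ≤ m := by
        refine (norm_add_le _ _).trans ?_
        rw [norm_smul, norm_smul, Real.norm_of_nonneg h1.le, Real.norm_of_nonneg hl0]
        nlinarith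
      simp only [hx, hy, this, if_true]
      exact hG x y l hl0 hl1
    · simp only [hx, hy, if_true, if_false]
      rw [Real.zero_rpow hl0'.ne', mul_zero]
      split_ifs <;> simp [hG0]
  · simp only [hx, if_false]
    rw [Real.zero_rpow h1.ne', zero_mul]
    split_ifs <;> simp [hG0]

theorem aemeas_supConv {n : ℕ} {f G : Euc n → ℝ} (hf0 : ∀ x, 0 ≤ f x) (hG0 : ∀ x, 0 ≤ G x)
    (hf : LogConcaveFn f) (hG : LogConcaveFn G) : AEMeasurable (supConv f G) := by
  have hconv : ∀ c : ℝ≥0∞, Convex ℝ {x | c < supConv f G x} := by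
    intro c x hx y hy p l hp hl hpl
    obtain rfl : p = 1 - l := by linarith
    have hl1 : l ≤ 1 := by linarith
    simp only [mem_ofPred_eq, supConv, lt_iSup_iff] at hx hy ⊢
    obtain ⟨x', hx'⟩ := hx
    obtain ⟨y', hy'⟩ := hy
    refine ⟨(1 - l) • x' + l • y', ?_⟩
    set P := f x' * G (x - x') with hP
    set Q := f y' * G (y - y') with hQ
    have hP0 : 0 ≤ P := mul_nonneg (hf0 _) (hG0 _)
    have hQ0 : 0 ≤ Q := mul_nonneg (hf0 _) (hG0 _)
    have key : P ^ (1 - l) * Q ^ l ≤ f ((1 - l) • x' + l • y') *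
        G ((1 - l) • x + l • y - ((1 - l) • x' + l • y')) := by
      have e : (1 - l) • x + l • y - ((1 - l) • x' + l • y')
          = (1 - l) • (x - x') + l • (y - y') := by
        simp only [smul_sub]; abel
      rw [e, hP, hQ, Real.mul_rpow (hf0 _) (hG0 _), Real.mul_rpow (hf0 _) (hG0 _)]
      calc _ = (f x' ^ (1 - l) * f y' ^ l) * (G (x - x') ^ (1 - l) * G (y - y') ^ l) := by ring
        _ ≤ _ := mul_le_mul (hf _ _ _ hl hl1) (hG _ _ _ hl hl1)
          (mul_nonneg (Real.rpow_nonneg (hG0 _) _) (Real.rpow_nonneg (hG0 _) _)) (hf0 _)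
    refine lt_of_lt_of_le ?_ (ENNReal.ofReal_le_ofReal key)
    have hmin : c < ENNReal.ofReal (min P Q) := by
      rcases min_choice P Q with h | h <;> rw [h] <;> assumption
    refine hmin.trans_le (ENNReal.ofReal_le_ofReal ?_)
    have hm0 : 0 ≤ min P Q := le_min hP0 hQ0
    have hmpos : 0 < min P Q := by
      by_contra hh
      rw [ENNReal.ofReal_of_nonpos (not_lt.1 hh)] at hmin
      simp at hmin
    calc min P Q = min P Q ^ (1 - l) * min P Q ^ l := by
          rw [← Real.rpow_add hmpos]; simp
      _ ≤ P ^ (1 - l) * Q ^ l := by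
          gcongr
          · exact min_le_left _ _
          · exact min_le_right _ _
  refine NullMeasurable.aemeasurable ?_
  exact @measurable_of_Ioi ENNReal (NullMeasurableSpace (Euc n) volume) _ _ _ _ _ _ _ _
    (fun c => (hconv c).nullMeasurableSet volume)

theorem supConv_interp {n : ℕ} {f G : Euc n → ℝ} (hf0 : ∀ x, 0 ≤ f x) (hG0 : ∀ x, 0 ≤ G x)
    (hf : LogConcaveFn f) {t l : ℝ} (ht : 0 < t) (hl0 : 0 < l) (hl1 : l < 1) (x z : Euc n) :
    ENNReal.ofReal (f x) ^ (1 - l) * supConv f (dil t G) z ^ l ≤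
      supConv f (dil (l * t) G) ((1 - l) • x + l • z) := by
  have h1 : 0 < 1 - l := sub_pos.2 hl1
  have e : supConv f (dil t G) z ^ l =
      ⨆ y, ENNReal.ofReal (f y * dil t G (z - y)) ^ l :=
    (ENNReal.orderIsoRpow l hl0).map_iSup _
  rw [e, ENNReal.mul_iSup]
  refine iSup_le fun y => ?_
  refine le_trans ?_ (le_iSup _ ((1 - l) • x + l • y))
  rw [ENNReal.ofReal_rpow_of_nonneg (hf0 _) h1.le,
    ENNReal.ofReal_rpow_of_nonneg (mul_nonneg (hf0 _) (dil_nonneg hG0 _ _)) hl0.le,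
    ← ENNReal.ofReal_mul (Real.rpow_nonneg (hf0 _) _)]
  apply ENNReal.ofReal_le_ofReal
  have e2 : (1 - l) • x + l • z - ((1 - l) • x + l • y) = l • (z - y) := by
    rw [smul_sub]; abel
  rw [e2, Real.mul_rpow (hf0 _) (dil_nonneg hG0 _ _), ← mul_assoc]
  have e3 : dil t G (z - y) ^ l = dil (l * t) G (l • (z - y)) := by
    unfold dil
    rw [← Real.rpow_mul (hG0 _), smul_smul, mul_comm t l]
    congr 3
    field_simp
  rw [e3]
  exact mul_le_mul_of_nonneg_right (hf _ _ _ hl0.le hl1.le) (dil_nonneg hG0 _ _)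

theorem mass_interp {n : ℕ} {f G : Euc n → ℝ} (hf0 : ∀ x, 0 ≤ f x) (hG0 : ∀ x, 0 ≤ G x)
    (hf : LogConcaveFn f) (hG : LogConcaveFn G)
    {t l : ℝ} (ht : 0 < t) (hl0 : 0 < l) (hl1 : l < 1) :
    totalMass f ^ (1 - l) * (∫⁻ x, supConv f (dil t G) x) ^ l ≤
      ∫⁻ x, supConv f (dil (l * t) G) x :=
  pl_euc hl0 hl1 (aemeas_supConv hf0 (dil_nonneg hG0 _) hf (logConcave_dil hG0 hG (by positivity)))
    (supConv_interp hf0 hG0 hf ht hl0 hl1)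

/-- The normalized mass ratio `(∫ f⋆(t·G) / ∫ f)^(1/t)`. -/
def mratio {n : ℕ} (f G : Euc n → ℝ) (t : ℝ) : ℝ≥0∞ :=
  ((∫⁻ x, supConv f (dil t G) x) * (totalMass f)⁻¹) ^ t⁻¹

theorem mratio_anti {n : ℕ} {f G : Euc n → ℝ} (hf0 : ∀ x, 0 ≤ f x) (hG0 : ∀ x, 0 ≤ G x)
    (hf : LogConcaveFn f) (hG : LogConcaveFn G) (hp : 0 < totalMass f) (hfin : totalMass f < ⊤)
    {s t : ℝ} (hs : 0 < s) (hst : s ≤ t) : mratio f G t ≤ mratio f G s := by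
  rcases hst.eq_or_lt with rfl | hst
  · exact le_rfl
  have ht : 0 < t := hs.trans hst
  have hl0 : 0 < s / t := by positivity
  have hl1 : s / t < 1 := (div_lt_one ht).2 hst
  have key := mass_interp hf0 hG0 hf hG ht hl0 hl1
  rw [div_mul_cancel₀ _ ht.ne'] at key
  unfold mratio
  set I := totalMass f
  have hI0 : I ≠ 0 := hp.ne'
  have hIt : I ≠ ⊤ := hfin.ne
  have e : ((∫⁻ x, supConv f (dil t G) x) * I⁻¹) ^ (s / t) ≤
      (∫⁻ x, supConv f (dil s G) x) * I⁻¹ := by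
    generalize s / t = q at *
    generalize (∫⁻ x, supConv f (dil t G) x) = J at *
    refine le_trans (le_of_eq ?_) (mul_le_mul_left key I⁻¹)
    rw [ENNReal.mul_rpow_of_nonneg _ _ hl0.le, ENNReal.rpow_sub _ _ hI0 hIt, ENNReal.rpow_one,
      ENNReal.inv_rpow, div_eq_mul_inv]
    calc _ = J ^ q * (I ^ q)⁻¹ * (I * I⁻¹) := by
          rw [ENNReal.mul_inv_cancel hI0 hIt, mul_one]
      _ = _ := by ring
  calc _ = (((∫⁻ x, supConv f (dil t G) x) * I⁻¹) ^ (s / t)) ^ s⁻¹ := by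
        rw [← ENNReal.rpow_mul]; congr 1; field_simp
    _ ≤ _ := ENNReal.rpow_le_rpow e (by positivity)

theorem supConv_mono {n : ℕ} {f G H : Euc n → ℝ} (hf0 : ∀ x, 0 ≤ f x) (h : ∀ x, G x ≤ H x)
    (x : Euc n) : supConv f G x ≤ supConv f H x :=
  iSup_mono fun _ => ENNReal.ofReal_le_ofReal (mul_le_mul_of_nonneg_left (h _) (hf0 _))

theorem dil_mono {n : ℕ} {G H : Euc n → ℝ} (hG0 : ∀ x, 0 ≤ G x) (h : ∀ x, G x ≤ H x)
    {t : ℝ} (ht : 0 < t) (x : Euc n) : dil t G x ≤ dil t H x :=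
  Real.rpow_le_rpow (hG0 _) (h _) ht.le

theorem mass_trunc {n : ℕ} {f g : Euc n → ℝ} (hf0 : ∀ x, 0 ≤ f x) (hg0 : ∀ x, 0 ≤ g x)
    (hf : LogConcaveFn f) (hg : LogConcaveFn g) {t : ℝ} (ht : 0 < t) :
    ∫⁻ x, supConv f (dil t g) x =
      ⨆ m : ℕ, ∫⁻ x, supConv f (dil t (fun x => if ‖x‖ ≤ (m : ℝ) then g x else 0)) x := by
  have h0 : ∀ (m : ℕ) x, 0 ≤ (fun x => if ‖x‖ ≤ (m : ℝ) then g x else 0) x := by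
    intro m x; dsimp only; split_ifs <;> simp [hg0]
  rw [← lintegral_iSup']
  · refine lintegral_congr fun x => le_antisymm ?_ ?_
    · refine iSup_le fun y => ?_
      obtain ⟨m, hm⟩ := exists_nat_ge ‖t⁻¹ • (x - y)‖
      refine le_trans ?_ (le_iSup _ m)
      refine le_trans (le_of_eq ?_) (le_iSup _ y)
      simp only [dil, if_pos hm]
    · refine iSup_le fun m => supConv_mono hf0 (dil_mono (h0 m) ?_ ht) x
      intro x; split_ifs <;> simp [hg0]
  · intro m
    exact aemeas_supConv hf0 (dil_nonneg (h0 m) _) hf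
      (logConcave_dil (h0 m) (logConcave_trunc hg0 hg _) ht)
  · refine .of_forall fun x i j hij => supConv_mono hf0 (dil_mono (h0 i) ?_ ht) x
    intro x
    have : (i : ℝ) ≤ j := by exact_mod_cast hij
    split_ifs with h1 h2
    · exact le_rfl
    · exact absurd (h1.trans this) h2
    · exact hg0 x
    · exact le_rfl

theorem quot_real {r t A : ℝ} (hr : 0 < r) (hA : 0 ≤ A) :
    ((t⁻¹ : ℝ) : EReal) * (((ENNReal.ofReal r * ENNReal.ofReal (A ^ t) : ℝ≥0∞) : EReal) -
      ((ENNReal.ofReal r : ℝ≥0∞) : EReal)) = ((t⁻¹ * (r * A ^ t - r) : ℝ) : EReal) := by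
  rw [← ENNReal.ofReal_mul hr.le, EReal.coe_ennreal_ofReal, EReal.coe_ennreal_ofReal,
    max_eq_left hr.le, max_eq_left (mul_nonneg hr.le (Real.rpow_nonneg hA _))]
  norm_cast

theorem quot_lower {r t : ℝ} (hr : 0 < r) (ht : 0 < t) (a : ℝ≥0∞) :
    (r : EReal) * ENNReal.log a ≤
      ((t⁻¹ : ℝ) : EReal) * (((ENNReal.ofReal r * a ^ t : ℝ≥0∞) : EReal) -
      ((ENNReal.ofReal r : ℝ≥0∞) : EReal)) := by
  by_cases ha : a = ⊤
  · subst ha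
    have h1 : ENNReal.ofReal r * (⊤ : ℝ≥0∞) ^ t = ⊤ := by
      rw [ENNReal.top_rpow_of_pos ht, ENNReal.mul_top (by simpa using hr)]
    have h2 : ((⊤ : ℝ≥0∞) : EReal) - ((ENNReal.ofReal r : ℝ≥0∞) : EReal) = ⊤ := by
      rw [EReal.coe_ennreal_ofReal, EReal.coe_ennreal_top, EReal.top_sub_coe]
    rw [h1, h2, EReal.coe_mul_top_of_pos (inv_pos.2 ht)]
    exact le_top
  by_cases ha0 : a = 0
  · subst ha0
    rw [ENNReal.log_zero, EReal.coe_mul_bot_of_pos hr]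
    exact bot_le
  obtain ⟨A, hA, rfl⟩ : ∃ A : ℝ, 0 < A ∧ a = ENNReal.ofReal A :=
    ⟨a.toReal, ENNReal.toReal_pos ha0 ha, (ENNReal.ofReal_toReal ha).symm⟩
  rw [ENNReal.ofReal_rpow_of_pos hA, quot_real hr hA.le, ENNReal.log_ofReal_of_pos hA,
    ← EReal.coe_mul, EReal.coe_le_coe_iff]
  have h := Real.log_le_sub_one_of_pos (Real.rpow_pos_of_pos hA t)
  rw [Real.log_rpow hA] at h
  rw [inv_mul_eq_div, le_div_iff₀ ht]
  nlinarith

theorem tendsto_const_mul_ereal {α : Type*} {F : Filter α} {r : ℝ} (hr : 0 < r) {u : α → EReal}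
    {L : EReal} (h : Tendsto u F (𝓝 L)) : Tendsto (fun x => (r : EReal) * u x) F (𝓝 (r * L)) := by
  have hr' : (r : EReal) ≠ 0 := by exact_mod_cast hr.ne'
  exact EReal.Tendsto.mul tendsto_const_nhds h (Or.inl hr') (Or.inl hr') (Or.inl (by simp))
    (Or.inl (by simp))

/-- Supremum of the normalized mass ratios. -/
def msup {n : ℕ} (f G : Euc n → ℝ) : ℝ≥0∞ := ⨆ t : Ioi (0 : ℝ), mratio f G t

theorem delta_tendsto {n : ℕ} {f G : Euc n → ℝ} (hf0 : ∀ x, 0 ≤ f x) (hG0 : ∀ x, 0 ≤ G x)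
    (hf : LogConcaveFn f) (hG : LogConcaveFn G) (hp : 0 < totalMass f) (hfin : totalMass f < ⊤) :
    Tendsto (deltaQuot f G) (𝓝[>] (0 : ℝ))
      (𝓝 (((totalMass f).toReal : EReal) * ENNReal.log (msup f G))) := by
  have hr : 0 < (totalMass f).toReal := ENNReal.toReal_pos hp.ne' hfin.ne
  set r := (totalMass f).toReal with hrdef
  have hI : totalMass f = ENNReal.ofReal r := (ENNReal.ofReal_toReal hfin.ne).symm
  have hle : ∀ t : ℝ, 0 < t → mratio f G t ≤ msup f G := fun t ht =>
    le_iSup (fun t : Ioi (0 : ℝ) => mratio f G t) ⟨t, ht⟩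
  have hT : Tendsto (mratio f G) (𝓝[>] (0 : ℝ)) (𝓝 (msup f G)) := by
    rw [tendsto_order]
    constructor
    · intro c hc
      obtain ⟨⟨t, ht⟩, hct⟩ := lt_iSup_iff.1 hc
      filter_upwards [Ioc_mem_nhdsGT ht] with s hs
      exact hct.trans_le (mratio_anti hf0 hG0 hf hG hp hfin hs.1 hs.2)
    · intro c hc
      filter_upwards [self_mem_nhdsWithin] with s hs
      exact (hle s hs).trans_lt hc
  have hJ : ∀ t : ℝ, 0 < t →
      ∫⁻ x, supConv f (dil t G) x = ENNReal.ofReal r * mratio f G t ^ t := by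
    intro t ht
    rw [mratio, ← ENNReal.rpow_mul, inv_mul_cancel₀ ht.ne', ENNReal.rpow_one, ← hI, mul_comm,
      mul_assoc, ENNReal.inv_mul_cancel hp.ne' hfin.ne, mul_one]
  have hq : ∀ t : ℝ, 0 < t → deltaQuot f G t = ((t⁻¹ : ℝ) : EReal) *
      (((ENNReal.ofReal r * mratio f G t ^ t : ℝ≥0∞) : EReal) -
      ((ENNReal.ofReal r : ℝ≥0∞) : EReal)) := by
    intro t ht
    rw [deltaQuot, hJ t ht, hI]
  have hlow : ∀ᶠ t in 𝓝[>] (0 : ℝ), (r : EReal) * ENNReal.log (mratio f G t) ≤ deltaQuot f G t := by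
    filter_upwards [self_mem_nhdsWithin] with t ht
    rw [hq t ht]
    exact quot_lower hr ht _
  have hlowT : Tendsto (fun t => (r : EReal) * ENNReal.log (mratio f G t)) (𝓝[>] (0 : ℝ))
      (𝓝 (r * ENNReal.log (msup f G))) :=
    tendsto_const_mul_ereal hr ((ENNReal.continuous_log.tendsto _).comp hT)
  by_cases hM : msup f G = ⊤
  · rw [hM, ENNReal.log_top, EReal.coe_mul_top_of_pos hr] at hlowT ⊢
    exact tendsto_nhds_top_mono hlowT hlow
  obtain ⟨B, hB, hBM⟩ : ∃ B : ℝ, 0 ≤ B ∧ msup f G = ENNReal.ofReal B :=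
    ⟨_, ENNReal.toReal_nonneg, (ENNReal.ofReal_toReal hM).symm⟩
  have hup : ∀ᶠ t in 𝓝[>] (0 : ℝ), deltaQuot f G t ≤ ((t⁻¹ * (r * B ^ t - r) : ℝ) : EReal) := by
    filter_upwards [self_mem_nhdsWithin] with t ht
    have ht : 0 < t := ht
    rw [hq t ht, ← quot_real hr hB]
    refine mul_le_mul_of_nonneg_left ?_ (by exact_mod_cast (inv_pos.2 ht).le)
    refine EReal.sub_le_sub ?_ le_rfl
    rw [EReal.coe_ennreal_le_coe_ennreal_iff, ← ENNReal.ofReal_rpow_of_nonneg hB ht.le, ← hBM]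
    gcongr
    exact hle t ht
  refine tendsto_of_tendsto_of_tendsto_of_le_of_le' hlowT ?_ hlow hup
  rw [hBM]
  rcases hB.eq_or_lt with rfl | hB
  · rw [ENNReal.ofReal_zero, ENNReal.log_zero, EReal.coe_mul_bot_of_pos hr]
    rw [EReal.tendsto_coe_nhds_bot_iff]
    have : Tendsto (fun t : ℝ => t⁻¹ * (-r)) (𝓝[>] 0) atBot :=
      tendsto_inv_nhdsGT_zero.atTop_mul_const_of_neg (neg_lt_zero.2 hr)
    refine this.congr' ?_
    filter_upwards [self_mem_nhdsWithin] with t ht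
    rw [Real.zero_rpow (ne_of_gt ht)]
    ring
  · rw [ENNReal.log_ofReal_of_pos hB, ← EReal.coe_mul]
    refine (continuous_coe_real_ereal.tendsto _).comp ?_
    have hd : HasDerivAt (fun t : ℝ => r * B ^ t) (r * Real.log B) 0 := by
      have := ((Real.hasStrictDerivAt_const_rpow hB 0).hasDerivAt).const_mul r
      simpa using this
    have := hd.tendsto_slope_zero_right
    simpa using this

theorem msup_trunc {n : ℕ} {f g : Euc n → ℝ} (hf0 : ∀ x, 0 ≤ f x) (hg0 : ∀ x, 0 ≤ g x)
    (hf : LogConcaveFn f) (hg : LogConcaveFn g) :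
    msup f g = ⨆ m : ℕ, msup f (fun x => if ‖x‖ ≤ (m : ℝ) then g x else 0) := by
  unfold msup
  rw [iSup_comm]
  refine iSup_congr fun t => ?_
  have ht : (0 : ℝ) < t := t.2
  unfold mratio
  rw [mass_trunc hf0 hg0 hf hg ht, ENNReal.iSup_mul]
  exact (ENNReal.orderIsoRpow _ (inv_pos.2 ht)).map_iSup _

theorem msup_mono {n : ℕ} {f G H : Euc n → ℝ} (hf0 : ∀ x, 0 ≤ f x) (hG0 : ∀ x, 0 ≤ G x)
    (h : ∀ x, G x ≤ H x) : msup f G ≤ msup f H := by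
  refine iSup_mono fun t => ?_
  have ht : (0 : ℝ) < t := t.2
  unfold mratio
  refine ENNReal.rpow_le_rpow ?_ (inv_pos.2 ht).le
  gcongr with x
  exact supConv_mono hf0 (dil_mono hG0 h ht) x

/-- For the truncations `g_m = g · 1_{|x| ≤ m}`, the first variations
`δ(f, g_m)` exist, are nondecreasing in `m`, and converge to `δ(f,g)` in `(-∞, +∞]`. -/
theorem first_variation_truncation (n : ℕ) (f g : Euc n → ℝ)
    (hf0 : ∀ x, 0 ≤ f x) (hfusc : UpperSemicontinuous f) (hflc : LogConcaveFn f)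
    (hfpos : 0 < totalMass f) (hffin : totalMass f < ⊤)
    (hg0 : ∀ x, 0 ≤ g x) (hgusc : UpperSemicontinuous g) (hglc : LogConcaveFn g) :
    ∃ (d : ℕ → EReal) (D : EReal),
      (∀ m : ℕ, Tendsto (deltaQuot f (fun x => if ‖x‖ ≤ (m : ℝ) then g x else 0))
        (𝓝[>] (0 : ℝ)) (𝓝 (d m))) ∧
      Monotone d ∧
      Tendsto (deltaQuot f g) (𝓝[>] (0 : ℝ)) (𝓝 D) ∧
      Tendsto d atTop (𝓝 D) := by
  have h0 : ∀ (m : ℕ) x, 0 ≤ (fun x => if ‖x‖ ≤ (m : ℝ) then g x else 0) x := by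
    intro m x; dsimp only; split_ifs <;> simp [hg0]
  have hr : 0 < (totalMass f).toReal := ENNReal.toReal_pos hfpos.ne' hffin.ne
  have hmono : Monotone fun m : ℕ => msup f (fun x => if ‖x‖ ≤ (m : ℝ) then g x else 0) := by
    intro i j hij
    refine msup_mono hf0 (h0 i) fun x => ?_
    have : (i : ℝ) ≤ j := by exact_mod_cast hij
    split_ifs with h1 h2
    · exact le_rfl
    · exact absurd (h1.trans this) h2
    · exact hg0 x
    · exact le_rfl
  refine ⟨fun m => ((totalMass f).toReal : EReal) *
      ENNReal.log (msup f (fun x => if ‖x‖ ≤ (m : ℝ) then g x else 0)),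
    ((totalMass f).toReal : EReal) * ENNReal.log (msup f g), ?_, ?_, ?_, ?_⟩
  · intro m
    exact delta_tendsto hf0 (h0 m) hflc (logConcave_trunc hg0 hglc _) hfpos hffin
  · intro i j hij
    exact mul_le_mul_of_nonneg_left (ENNReal.log_monotone (hmono hij)) (by exact_mod_cast hr.le)
  · exact delta_tendsto hf0 hg0 hflc hglc hfpos hffin
  · refine tendsto_const_mul_ereal hr ((ENNReal.continuous_log.tendsto _).comp ?_)
    rw [msup_trunc hf0 hg0 hflc hglc]
    exact tendsto_atTop_iSup hmono

end
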